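/- arXiv:2007.00399 — 2 statements merged into one kernel-verified Lean document; each statement's English description precedes it below -/
import Mathlib

section
/- The function f is twice differentiable at θ* and its Hessian at θ* equals √(2/π)·((1 − η̃)/σ)·H; that is, the second derivative of f at θ* is the symmetric bilinear form (u, v) ↦ √(2/π)·((1 − η̃)/σ)·⟨u, Hv⟩. -/
open MeasureTheory ProbabilityTheory Real
open scoped RealInnerProductSpace ENNReal

noncomputable section

/-- Euclidean space `ℝ^d`. -/
abbrev Vec (d : ℕ) := EuclideanSpace ℝ (Fin d)

/-- The expected `ℓ¹` loss `f(θ) = E |y - ⟨x, θ⟩|` where `y = ⟨x, θ*⟩ + ε + b`. -/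
noncomputable def fLoss {d : ℕ} {Ω : Type} [MeasurableSpace Ω] (P : Measure Ω)
    (x : Ω → Vec d) (ε b : Ω → ℝ) (θs θ : Vec d) : ℝ :=
  ∫ ω, |⟪x ω, θs⟫ + ε ω + b ω - ⟪x ω, θ⟫| ∂P

/-- `σ_θ = ‖θ - θ*‖_H = √⟨θ - θ*, H (θ - θ*)⟩`. -/
noncomputable def sigTh {d : ℕ} (H : Matrix (Fin d) (Fin d) ℝ) (θs θ : Vec d) : ℝ :=
  Real.sqrt ⟪θ - θs, Matrix.toEuclideanLin H (θ - θs)⟫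

/-- The effective outlier proportion `η̃ = 1 - E[exp (-b² / (2σ²))]`. -/
noncomputable def etaT {Ω : Type} [MeasurableSpace Ω] (P : Measure Ω) (b : Ω → ℝ)
    (σ : ℝ) : ℝ :=
  1 - ∫ ω, Real.exp (-(b ω) ^ 2 / (2 * σ ^ 2)) ∂P

/-- `α(z) = √(2/π) · (σ² + z²)^(-1/2) · E[exp (-b² / (2 (σ² + z²)))]`. -/
noncomputable def alphaF {Ω : Type} [MeasurableSpace Ω] (P : Measure Ω) (b : Ω → ℝ)
    (σ z : ℝ) : ℝ :=
  Real.sqrt (2 / π) * (Real.sqrt (σ ^ 2 + z ^ 2))⁻¹ *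
    ∫ ω, Real.exp (-(b ω) ^ 2 / (2 * (σ ^ 2 + z ^ 2))) ∂P

/-- The Gauss error function. -/
noncomputable def erf (t : ℝ) : ℝ :=
  2 / Real.sqrt π * ∫ u in (0:ℝ)..t, Real.exp (-u ^ 2)

/-!
Conditionally on `b`, the residual `⟨x, θ* - θ⟩ + ε + b` is `b + r Z` with `Z` standard normal and
`r = √(σ² + ‖θ - θ*‖_H²)`, so `f θ = F r` where `F r = E|b + r Z|`. Differentiating under the
expectation gives `F' r = E[sign (b + r Z) Z]`. Integration by parts against the Gaussian density,
the distributional derivative of the sign being `2 δ`, turns this into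
`√(2/π) E[exp (-b² / (2 r²))]`. By the chain rule `∇f θ = α(‖θ - θ*‖_H) H (θ - θ*)`: a continuous
scalar times a linear map vanishing at `θ*`, whose derivative at `θ*` is `α(0) H`.
-/

/-- A version of the product rule in which the scalar factor need only be continuous, because the
other factor vanishes at the base point. -/
lemma hasFDerivAt_smul_apply_sub {𝕜 E F : Type*} [NontriviallyNormedField 𝕜]
    [NormedAddCommGroup E] [NormedSpace 𝕜 E] [NormedAddCommGroup F] [NormedSpace 𝕜 F]
    {c : E → 𝕜} {a : E} (hc : ContinuousAt c a) (L : E →L[𝕜] F) :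
    HasFDerivAt (fun u => c u • L (u - a)) (c a • L) a := by
  have hc_sub : (fun u => c u - c a) =o[nhds a] fun _ => (1 : 𝕜) :=
    (Asymptotics.isLittleO_one_iff 𝕜).2 (tendsto_sub_nhds_zero_iff.2 hc)
  have hrem := hc_sub.smul_isBigO (L.isBigO_sub (nhds a) a)
  rw [hasFDerivAt_iff_isLittleO]
  simpa [sub_smul] using hrem

lemma integral_sign_sub_mul_deriv {f f' : ℝ → ℝ} (hderiv : ∀ x, HasDerivAt f (f' x) x)
    (hf' : Integrable f') (hf : Integrable f) (a : ℝ) :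
    ∫ x, (SignType.sign (x - a) : ℝ) * f' x = -(2 * f a) := by
  have hIic : ∫ x in Set.Iic a, f' x = f a := by
    simpa using integral_Iic_of_hasDerivAt_of_tendsto' (fun x _ => hderiv x) hf'.integrableOn
      (tendsto_zero_of_hasDerivAt_of_integrableOn_Iic (a := a) (fun x _ => hderiv x)
        hf'.integrableOn hf.integrableOn)
  have hIoi : ∫ x in Set.Ioi a, f' x = -f a := by
    simpa using integral_Ioi_of_hasDerivAt_of_tendsto' (fun x _ => hderiv x) hf'.integrableOn
      (tendsto_zero_of_hasDerivAt_of_integrableOn_Ioi (a := a) (fun x _ => hderiv x)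
        hf'.integrableOn hf.integrableOn)
  have hsign : ∀ᵐ x, (SignType.sign (x - a) : ℝ) * f' x
      = (Set.Ioi a).indicator f' x - (Set.Iic a).indicator f' x := by
    filter_upwards [Measure.ae_ne volume a] with x hx
    rcases hx.lt_or_gt with h | h
    · simp [h.le, sign_neg (sub_neg.2 h)]
    · simp [h, sign_pos (sub_pos.2 h)]
  rw [integral_congr_ae hsign, integral_sub (hf'.indicator measurableSet_Ioi)
    (hf'.indicator measurableSet_Iic), integral_indicator measurableSet_Ioi,
    integral_indicator measurableSet_Iic, hIoi, hIic]
  ring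

lemma hasDerivAt_integral_abs_add_mul {Ω : Type*} [MeasurableSpace Ω] {μ : Measure Ω}
    {X Z : Ω → ℝ} (hX : Integrable X μ) (hZ : Integrable Z μ) {r : ℝ}
    (hne : ∀ᵐ ω ∂μ, X ω + r * Z ω ≠ 0) :
    Integrable (fun ω => (SignType.sign (X ω + r * Z ω) : ℝ) * Z ω) μ ∧
      HasDerivAt (fun s => ∫ ω, |X ω + s * Z ω| ∂μ)
        (∫ ω, (SignType.sign (X ω + r * Z ω) : ℝ) * Z ω ∂μ) r := by
  have hint (s : ℝ) : Integrable (fun ω => X ω + s * Z ω) μ := hX.add (hZ.const_mul s)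
  refine hasDerivAt_integral_of_dominated_loc_of_lip (s := Set.univ) (bound := Z) Filter.univ_mem
    (.of_forall fun s => (hint s).abs.aestronglyMeasurable) (hint r).abs ?_
    (.of_forall fun ω => ?_) hZ ?_
  · have hsign : Measurable fun t : ℝ => (SignType.sign t : ℝ) :=
      funext deriv_abs ▸ measurable_deriv (fun t : ℝ => |t|)
    exact (hsign.comp_aemeasurable (hint r).aemeasurable).aestronglyMeasurable.mul
      hZ.aestronglyMeasurable
  · refine LipschitzOnWith.of_dist_le_mul fun s _ t _ => ?_
    calc |(|X ω + s * Z ω| - |X ω + t * Z ω|)|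
        ≤ |(X ω + s * Z ω) - (X ω + t * Z ω)| := abs_abs_sub_abs_le_abs_sub _ _
      _ = |Z ω| * |s - t| := by rw [← abs_mul]; ring_nf
  · filter_upwards [hne] with ω hω
    have hlin : HasDerivAt (fun s => X ω + s * Z ω) (Z ω) r := by
      simpa using ((hasDerivAt_id r).mul_const (Z ω)).const_add (X ω)
    exact (hasDerivAt_abs hω).comp r hlin

lemma hasDerivAt_gaussianPDFReal (m : ℝ) (v : NNReal) (z : ℝ) :
    HasDerivAt (gaussianPDFReal m v) (-((z - m) / v * gaussianPDFReal m v z)) z := by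
  have hexponent : HasDerivAt (fun z => -(z - m) ^ 2 / (2 * v)) (-((z - m) / v)) z := by
    refine ((((hasDerivAt_id z).sub_const m).pow 2).neg.div_const (2 * (v : ℝ))).congr_deriv ?_
    simp only [Nat.cast_ofNat, id_eq, Nat.add_one_sub_one, pow_one, mul_one]
    ring
  rw [gaussianPDFReal_def]
  exact (hexponent.exp.const_mul _).congr_deriv (by ring)

lemma integrable_sub_mul_gaussianPDFReal (m : ℝ) {v : NNReal} (hv : v ≠ 0) :
    Integrable fun z => (z - m) * gaussianPDFReal m v z := by
  have hid : Integrable (fun z : ℝ => z - m) (gaussianReal m v) :=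
    (memLp_one_iff_integrable.1 (memLp_id_gaussianReal 1)).sub (integrable_const m)
  rw [gaussianReal_of_var_ne_zero m hv, integrable_withDensity_iff_integrable_smul'
    (measurable_gaussianPDF m v) (.of_forall fun _ => gaussianPDF_lt_top)] at hid
  simpa [mul_comm] using hid

lemma integral_sign_sub_mul_sub_gaussianReal (m : ℝ) {v : NNReal} (hv : v ≠ 0) (a : ℝ) :
    ∫ z, (SignType.sign (z - a) : ℝ) * (z - m) ∂gaussianReal m v
      = 2 * v * gaussianPDFReal m v a := by
  have hv' : (v : ℝ) ≠ 0 := NNReal.coe_ne_zero.2 hv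
  have hderiv (z : ℝ) : HasDerivAt (fun z => -(v * gaussianPDFReal m v z))
      ((z - m) * gaussianPDFReal m v z) z :=
    ((hasDerivAt_gaussianPDFReal m v z).const_mul (v : ℝ)).neg.congr_deriv (by field_simp)
  calc ∫ z, (SignType.sign (z - a) : ℝ) * (z - m) ∂gaussianReal m v
      = ∫ z, (SignType.sign (z - a) : ℝ) * ((z - m) * gaussianPDFReal m v z) := by
        rw [integral_gaussianReal_eq_integral_smul hv]
        exact integral_congr_ae (.of_forall fun z => by simp only [smul_eq_mul]; ring)
    _ = -(2 * -(v * gaussianPDFReal m v a)) :=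
        integral_sign_sub_mul_deriv hderiv (integrable_sub_mul_gaussianPDFReal m hv)
          ((integrable_gaussianPDFReal m v).const_mul _).neg a
    _ = 2 * v * gaussianPDFReal m v a := by ring

lemma integral_sign_add_mul_mul_gaussianReal (t : ℝ) {r : ℝ} (hr : 0 < r) :
    ∫ z, (SignType.sign (t + r * z) : ℝ) * z ∂gaussianReal 0 1
      = √(2 / π) * rexp (-t ^ 2 / (2 * r ^ 2)) := by
  have hsign (z : ℝ) : SignType.sign (t + r * z) = SignType.sign (z - -t / r) := by
    rw [show t + r * z = r * (z - -t / r) by field_simp; ring, sign_mul, sign_pos hr, one_mul]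
  have hconst : 2 * (√(2 * π))⁻¹ = √(2 / π) := by
    rw [sqrt_mul zero_le_two, sqrt_div zero_le_two, mul_inv, ← mul_assoc, ← div_eq_mul_inv,
      ← div_eq_mul_inv, div_sqrt]
  have hpdf := integral_sign_sub_mul_sub_gaussianReal 0 one_ne_zero (-t / r)
  simp only [sub_zero, gaussianPDFReal, NNReal.coe_one, mul_one] at hpdf
  simp only [hsign, hpdf, ← mul_assoc, hconst]
  congr 2
  field_simp

lemma hasLaw_sqrt_mul_gaussianReal {Ω : Type*} [MeasurableSpace Ω] {P : Measure Ω} {Z : Ω → ℝ}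
    {v : ℝ} (hv : 0 ≤ v) (hZ : HasLaw Z (gaussianReal 0 1) P) :
    HasLaw (fun ω => √v * Z ω) (gaussianReal 0 v.toNNReal) P := by
  have hvar : NNReal.mk (√v ^ 2) (sq_nonneg _) * 1 = v.toNNReal := by
    ext
    simp [sq_sqrt hv, hv]
  simpa only [mul_zero, hvar] using gaussianReal_const_mul hZ √v

lemma ae_prod_snd_ne {α β : Type*} [MeasurableSpace α] [MeasurableSpace β] [MeasurableEq β]
    {μ : Measure α} {ν : Measure β} [SFinite ν] [NullSingletonClass ν] {f : α → β}
    (hf : AEMeasurable f μ) : ∀ᵐ p ∂μ.prod ν, p.2 ≠ f p.1 := by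
  have hmk : ∀ᵐ p ∂μ.prod ν, p.2 ≠ hf.mk f p.1 := by
    have hmeas : MeasurableSet {p : α × β | p.2 ≠ hf.mk f p.1} :=
      (measurableSet_eq_fun measurable_snd (hf.measurable_mk.comp measurable_fst)).compl
    exact (Measure.ae_prod_iff_ae_ae hmeas).2 (.of_forall fun a => Measure.ae_ne ν (hf.mk f a))
  filter_upwards [hmk, Measure.quasiMeasurePreserving_fst.ae hf.ae_eq_mk] with p hp hfp
  rwa [hfp]

lemma hasDerivAt_integral_abs_add_mul_gaussianReal {Ω : Type*} [MeasurableSpace Ω] {P : Measure Ω}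
    [IsFiniteMeasure P] {b : Ω → ℝ} (hb : Integrable b P) {r : ℝ} (hr : 0 < r) :
    HasDerivAt (fun s => ∫ p : Ω × ℝ, |b p.1 + s * p.2| ∂P.prod (gaussianReal 0 1))
      (√(2 / π) * ∫ ω, rexp (-(b ω) ^ 2 / (2 * r ^ 2)) ∂P) r := by
  have hz : Integrable (fun z : ℝ => z) (gaussianReal 0 1) :=
    memLp_one_iff_integrable.1 (memLp_id_gaussianReal 1)
  have := nullSingletonClass_gaussianReal (μ := 0) one_ne_zero
  have hne : ∀ᵐ p ∂P.prod (gaussianReal 0 1), b p.1 + r * p.2 ≠ 0 := by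
    filter_upwards [ae_prod_snd_ne (hb.aemeasurable.neg.div_const r)] with p hp hzero
    exact hp (eq_div_of_mul_eq hr.ne' (by simp only [Pi.neg_apply]; linarith))
  obtain ⟨hint, hderiv⟩ := hasDerivAt_integral_abs_add_mul (hb.comp_fst (gaussianReal 0 1))
    (hz.comp_snd P) hne
  refine hderiv.congr_deriv ?_
  rw [integral_prod _ hint, ← integral_const_mul]
  exact integral_congr_ae (.of_forall fun ω => integral_sign_add_mul_mul_gaussianReal (b ω) hr)

section Outliers

variable {Ω : Type} [MeasurableSpace Ω] {P : Measure Ω} {b : Ω → ℝ} {σ : ℝ}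

lemma continuous_alphaF [IsFiniteMeasure P] (hb : AEMeasurable b P) (hσ : σ ≠ 0) :
    Continuous (alphaF P b σ) := by
  have hpos (z : ℝ) : 0 < σ ^ 2 + z ^ 2 := by positivity
  have hint : Continuous fun z => ∫ ω, rexp (-(b ω) ^ 2 / (2 * (σ ^ 2 + z ^ 2))) ∂P := by
    refine continuous_of_dominated (bound := fun _ => 1) (fun z => ?_) (fun z => ?_)
      (integrable_const _) (.of_forall fun ω => ?_)
    · exact (by fun_prop : AEMeasurable _ P).aestronglyMeasurable
    · refine .of_forall fun ω => ?_
      rw [Real.norm_eq_abs, abs_exp, exp_le_one_iff, neg_div]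
      exact neg_nonpos.2 (by positivity)
    · fun_prop (disch := intro z; have := hpos z; positivity)
  have hinv : Continuous fun z => (√(σ ^ 2 + z ^ 2))⁻¹ :=
    Continuous.inv₀ (by fun_prop) fun z => (sqrt_pos.2 (hpos z)).ne'
  exact (continuous_const.mul hinv).mul hint

lemma alphaF_zero (hσ : 0 ≤ σ) : alphaF P b σ 0 = √(2 / π) * ((1 - etaT P b σ) / σ) := by
  simp only [alphaF, etaT, zero_pow two_ne_zero, add_zero, sqrt_sq hσ, sub_sub_cancel]
  ring

end Outliers

section EnergyNorm

variable {E : Type*} [NormedAddCommGroup E] [InnerProductSpace ℝ E] {T : E →L[ℝ] E}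

/-- The seminorm `‖v‖_T = √⟨v, T v⟩` of a positive operator `T`; `sigTh` is the case of
`v = θ - θ*` and a matrix `T = H`. -/
def energyNorm (T : E →L[ℝ] E) (v : E) : ℝ :=
  √⟪v, T v⟫

lemma energyNorm_sq (hT : T.IsPositive) (v : E) : energyNorm T v ^ 2 = ⟪v, T v⟫ :=
  sq_sqrt (hT.inner_nonneg_right v)

lemma energyNorm_zero (T : E →L[ℝ] E) : energyNorm T 0 = 0 := by
  simp [energyNorm]

lemma energyNorm_sub_rev (T : E →L[ℝ] E) (u v : E) :
    energyNorm T (u - v) = energyNorm T (v - u) := by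
  rw [energyNorm, ← neg_sub v u, map_neg, inner_neg_neg, ← energyNorm]

lemma continuous_energyNorm (T : E →L[ℝ] E) : Continuous (energyNorm T) := by
  unfold energyNorm
  fun_prop

lemma hasFDerivAt_sqrt_sq_add_energyNorm_sq (hT : T.IsPositive) {σ : ℝ} (hσ : σ ≠ 0) (v : E) :
    HasFDerivAt (fun v => √(σ ^ 2 + energyNorm T v ^ 2))
      ((√(σ ^ 2 + energyNorm T v ^ 2))⁻¹ • innerSL ℝ (T v)) v := by
  have hpos : 0 < σ ^ 2 + energyNorm T v ^ 2 := by positivity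
  simp only [energyNorm_sq hT] at hpos ⊢
  have hquad : HasFDerivAt (fun v => σ ^ 2 + ⟪v, T v⟫) ((2 : ℝ) • innerSL ℝ (T v)) v := by
    refine (((hasFDerivAt_id v).inner ℝ T.hasFDerivAt).const_add (σ ^ 2)).congr_fderiv ?_
    ext w
    have hsymm : ⟪v, T w⟫ = ⟪T v, w⟫ := (hT.isSymmetric v w).symm
    simp [hsymm, real_inner_comm w, two_mul]
  refine (hquad.sqrt hpos.ne').congr_fderiv ?_
  rw [smul_smul]
  congr 1
  field_simp

end EnergyNorm

section AbsLoss

variable {E : Type*} [NormedAddCommGroup E] [InnerProductSpace ℝ E]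

/-- The expected absolute error `E|y - ⟨x, θ⟩|` of the linear prediction of `y` from `x`; `fLoss`
is the case `y = ⟨x, θ*⟩ + ε + b` on `ℝ^d`. -/
def absLoss {Ω : Type*} [MeasurableSpace Ω] (P : Measure Ω) (x : Ω → E) (y : Ω → ℝ) (θ : E) : ℝ :=
  ∫ ω, |y ω - ⟪x ω, θ⟫| ∂P

variable [MeasurableSpace E] [OpensMeasurableSpace E] {Ω : Type} [MeasurableSpace Ω]
  {P : Measure Ω} {T : E →L[ℝ] E} {σ : ℝ} {x : Ω → E} {ε b : Ω → ℝ}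

lemma hasLaw_inner_add_gaussianReal (hT : T.IsPositive)
    (hx : ∀ v, HasLaw (fun ω => ⟪v, x ω⟫) (gaussianReal 0 ⟪v, T v⟫.toNNReal) P)
    (hε : HasLaw ε (gaussianReal 0 (σ ^ 2).toNNReal) P) (hxε : IndepFun x ε P) (v : E) :
    HasLaw (fun ω => ⟪v, x ω⟫ + ε ω)
      (gaussianReal 0 (σ ^ 2 + energyNorm T v ^ 2).toNNReal) P := by
  refine ⟨(hx v).aemeasurable.add hε.aemeasurable, ?_⟩
  have hindep : IndepFun (fun ω => ⟪v, x ω⟫) ε P :=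
    hxε.comp (φ := fun u => ⟪v, u⟫) (by fun_prop) measurable_id
  have hmap := gaussianReal_add_gaussianReal_of_indepFun hindep (hx v).map_eq hε.map_eq
  rwa [add_zero, add_comm ⟪v, T v⟫.toNNReal, ← Real.toNNReal_add (sq_nonneg σ)
    (hT.inner_nonneg_right v), ← energyNorm_sq hT] at hmap

variable [IsProbabilityMeasure P]

lemma absLoss_eq_integral_prod_gaussianReal (hT : T.IsPositive)
    (hx : ∀ v, HasLaw (fun ω => ⟪v, x ω⟫) (gaussianReal 0 ⟪v, T v⟫.toNNReal) P)
    (hε : HasLaw ε (gaussianReal 0 (σ ^ 2).toNNReal) P) (hb : AEMeasurable b P)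
    (hxε : IndepFun x ε P) (hxεb : IndepFun (fun ω => (x ω, ε ω)) b P) (θs θ : E) :
    absLoss P x (fun ω => ⟪x ω, θs⟫ + ε ω + b ω) θ
      = ∫ p : Ω × ℝ, |b p.1 + √(σ ^ 2 + energyNorm T (θ - θs) ^ 2) * p.2|
          ∂P.prod (gaussianReal 0 1) := by
  set r := √(σ ^ 2 + energyNorm T (θ - θs) ^ 2)
  have hresid : IdentDistrib (fun ω => ⟪θs - θ, x ω⟫ + ε ω) (fun p : Ω × ℝ => r * p.2) P
      (P.prod (gaussianReal 0 1)) := by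
    refine (hasLaw_inner_add_gaussianReal hT hx hε hxε (θs - θ)).identDistrib ?_
    rw [energyNorm_sub_rev]
    exact hasLaw_sqrt_mul_gaussianReal (by positivity) measurePreserving_snd.hasLaw
  have hcorr : IdentDistrib b (fun p : Ω × ℝ => b p.1) P (P.prod (gaussianReal 0 1)) :=
    (HasLaw.mk hb rfl).identDistrib ((HasLaw.mk hb rfl).fun_comp measurePreserving_fst.hasLaw)
  have hindep : IndepFun b (fun ω => ⟪θs - θ, x ω⟫ + ε ω) P :=
    (hxεb.comp (φ := fun p : E × ℝ => ⟪θs - θ, p.1⟫ + p.2) (by fun_prop) measurable_id).symm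
  have hpair := hcorr.prodMk hresid hindep (indepFun_prod₀ hb (Y := (r * ·)) (by fun_prop))
  calc absLoss P x (fun ω => ⟪x ω, θs⟫ + ε ω + b ω) θ
      = ∫ ω, |b ω + (⟪θs - θ, x ω⟫ + ε ω)| ∂P := by
        refine integral_congr_ae (.of_forall fun ω => congrArg abs ?_)
        simp only [real_inner_comm (x ω), inner_sub_right]
        ring
    _ = ∫ p : Ω × ℝ, |b p.1 + r * p.2| ∂P.prod (gaussianReal 0 1) :=
        (hpair.comp (u := fun q : ℝ × ℝ => |q.1 + q.2|) (by fun_prop)).integral_eq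

lemma hasFDerivAt_absLoss (hT : T.IsPositive) (hσ : σ ≠ 0)
    (hx : ∀ v, HasLaw (fun ω => ⟪v, x ω⟫) (gaussianReal 0 ⟪v, T v⟫.toNNReal) P)
    (hε : HasLaw ε (gaussianReal 0 (σ ^ 2).toNNReal) P) (hb : Integrable b P)
    (hxε : IndepFun x ε P) (hxεb : IndepFun (fun ω => (x ω, ε ω)) b P) (θs θ : E) :
    HasFDerivAt (absLoss P x fun ω => ⟪x ω, θs⟫ + ε ω + b ω)
      (alphaF P b σ (energyNorm T (θ - θs)) • innerSL ℝ (T (θ - θs))) θ := by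
  have hpos : 0 < σ ^ 2 + energyNorm T (θ - θs) ^ 2 := by positivity
  have hradius := (hasFDerivAt_sqrt_sq_add_energyNorm_sq hT hσ (θ - θs)).comp θ
    ((hasFDerivAt_id θ).sub_const θs)
  have hloss := (hasDerivAt_integral_abs_add_mul_gaussianReal hb (sqrt_pos.2 hpos)).comp_hasFDerivAt
    θ hradius
  rw [sq_sqrt hpos.le] at hloss
  rw [funext (absLoss_eq_integral_prod_gaussianReal hT hx hε hb.aemeasurable hxε hxεb θs)]
  refine hloss.congr_fderiv ?_
  rw [alphaF, ContinuousLinearMap.comp_id, smul_smul, mul_right_comm]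

theorem stmt2_general (hT : T.IsPositive) (hσ : 0 < σ)
    (hx : ∀ v, HasLaw (fun ω => ⟪v, x ω⟫) (gaussianReal 0 ⟪v, T v⟫.toNNReal) P)
    (hε : HasLaw ε (gaussianReal 0 (σ ^ 2).toNNReal) P) (hb : Integrable b P)
    (hxε : IndepFun x ε P) (hxεb : IndepFun (fun ω => (x ω, ε ω)) b P) (θs : E) :
    Differentiable ℝ (absLoss P x fun ω => ⟪x ω, θs⟫ + ε ω + b ω) ∧
      HasFDerivAt (fderiv ℝ (absLoss P x fun ω => ⟪x ω, θs⟫ + ε ω + b ω))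
        ((√(2 / π) * ((1 - etaT P b σ) / σ)) • (innerSL ℝ ∘L T)) θs := by
  have hgrad := hasFDerivAt_absLoss hT hσ.ne' hx hε hb hxε hxεb θs
  refine ⟨fun θ => (hgrad θ).differentiableAt, ?_⟩
  have hcont : Continuous fun θ => alphaF P b σ (energyNorm T (θ - θs)) :=
    (continuous_alphaF hb.aemeasurable hσ.ne').comp
      ((continuous_energyNorm T).comp (continuous_sub_right θs))
  have hhess := hasFDerivAt_smul_apply_sub hcont.continuousAt (innerSL ℝ ∘L T) (a := θs)
  rw [sub_self, energyNorm_zero, alphaF_zero hσ.le] at hhess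
  rwa [funext fun θ => (hgrad θ).fderiv]

end AbsLoss

theorem stmt2 {d : ℕ} (hd : 1 ≤ d)
    {Ω : Type} [MeasurableSpace Ω] (P : Measure Ω) [IsProbabilityMeasure P]
    (θs : Vec d) (H : Matrix (Fin d) (Fin d) ℝ) (hH : H.PosDef)
    (σ η : ℝ) (hσ : 0 < σ) (hη0 : 0 ≤ η) (hη1 : η < 1)
    (x : Ω → Vec d) (ε b : Ω → ℝ)
    (hxm : Measurable x) (hεm : Measurable ε) (hbm : Measurable b)
    (hxg : ∀ v : Vec d, Measure.map (fun ω => ⟪v, x ω⟫) P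
        = gaussianReal 0 (Real.toNNReal ⟪v, Matrix.toEuclideanLin H v⟫))
    (hεg : Measure.map ε P = gaussianReal 0 (Real.toNNReal (σ ^ 2)))
    (hbη : P {ω | b ω ≠ 0} = ENNReal.ofReal η)
    (hbi : Integrable b P)
    (hind1 : IndepFun x ε P)
    (hind2 : IndepFun (fun ω => (x ω, ε ω)) b P):
    (∀ᶠ θ in nhds θs, DifferentiableAt ℝ (fun θ' => fLoss P x ε b θs θ') θ) ∧
    ∃ B : Vec d →L[ℝ] Vec d →L[ℝ] ℝ,
      (∀ u v : Vec d, B u v =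
          Real.sqrt (2 / π) * ((1 - etaT P b σ) / σ) * ⟪u, Matrix.toEuclideanLin H v⟫) ∧
      HasFDerivAt (fderiv ℝ (fun θ => fLoss P x ε b θs θ)) B θs := by
  have hT : (Matrix.toEuclideanLin H).toContinuousLinearMap.IsPositive :=
    (LinearMap.isPositive_toContinuousLinearMap_iff _).2
      (Matrix.isPositive_toEuclideanLin_iff.2 hH.posSemidef)
  obtain ⟨hdiff, hhess⟩ := stmt2_general hT hσ (fun v => ⟨by fun_prop, hxg v⟩)
    ⟨hεm.aemeasurable, hεg⟩ hbi hind1 hind2 θs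
  exact ⟨.of_forall hdiff, _, fun u v => congrArg _ (hT.isSymmetric u v), hhess⟩
end
end

section
/- Fix a real number b̃ and define f̃(s) = b̃·erf( b̃/√(1 + s²) ) + (1/√π)·√(1 + s²)·exp( −b̃²/(1 + s²) ). Then for every σ̃ ∈ [0,1], ((√2 − 1)/√π)·σ̃²·exp(−b̃²) ≤ f̃(σ̃) − f̃(0). -/
/-!
With `v = √(1 + s²)` one has `f̃(s) = F(v)`, where
`F(v) = b · erf (b / v) + v · exp (-(b / v)²) / √π` is the mean of `|X|` for a Gaussian `X` of mean
`b` and variance `v² / 2`. In `F'` the two terms carrying `b²` cancel, leaving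
`F'(v) = exp (-(b / v)²) / √π`, which is at least `exp (-b²) / √π` for `v ≥ 1`. Hence
`F(v) - F(1) ≥ (v - 1) exp (-b²) / √π`, and `v - 1 ≥ (√2 - 1) s²` because the concave function
`t ↦ √(1 + t)` lies above its chord on `[0, 1]`.
-/

open Real

noncomputable section

/-- `f̃(s) = b̃ · erf (b̃ / √(1 + s²)) + (1/√π) · √(1 + s²) · exp (-b̃² / (1 + s²))`. -/
noncomputable def ftil (b s : ℝ) : ℝ :=
  b * erf (b / Real.sqrt (1 + s ^ 2))
    + 1 / Real.sqrt π * Real.sqrt (1 + s ^ 2) * Real.exp (-b ^ 2 / (1 + s ^ 2))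

theorem hasDerivAt_erf (t : ℝ) : HasDerivAt erf (2 / √π * exp (-t ^ 2)) t := by
  have hc : Continuous fun u : ℝ ↦ exp (-u ^ 2) := by fun_prop
  exact (hc.integral_hasStrictDerivAt 0 t).hasDerivAt.const_mul _

/-- The closed form of the mean of `|X|` for `X` Gaussian with mean `b` and variance `v ^ 2 / 2`,
where `0 < v`; it equals `ftil b s` at `v = √(1 + s ^ 2)`. The parameter `v` is `√2` times the
standard deviation, so that the argument of `erf` is `b / v`. -/
def foldedNormalMean (b v : ℝ) : ℝ :=
  b * erf (b / v) + v / √π * exp (-(b / v) ^ 2)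

theorem ftil_eq_foldedNormalMean (b s : ℝ) : ftil b s = foldedNormalMean b √(1 + s ^ 2) := by
  rw [ftil, foldedNormalMean, div_pow, sq_sqrt (by positivity), neg_div, one_div_mul_eq_div]

theorem ftil_zero (b : ℝ) : ftil b 0 = foldedNormalMean b 1 := by
  simp [ftil_eq_foldedNormalMean]

theorem hasDerivAt_foldedNormalMean (b : ℝ) {v : ℝ} (hv : v ≠ 0) :
    HasDerivAt (foldedNormalMean b) (exp (-(b / v) ^ 2) / √π) v := by
  have h_div : HasDerivAt (fun x ↦ b / x) (-b / v ^ 2) v :=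
    ((hasDerivAt_inv hv).const_mul b).congr_deriv (by ring)
  have h_erf : HasDerivAt (fun x ↦ b * erf (b / x))
      (b * (2 / √π * exp (-(b / v) ^ 2) * (-b / v ^ 2))) v :=
    ((hasDerivAt_erf (b / v)).comp v h_div).const_mul b
  have h_exp : HasDerivAt (fun x ↦ exp (-(b / x) ^ 2))
      (exp (-(b / v) ^ 2) * (2 * b ^ 2 / v ^ 3)) v :=
    (h_div.fun_pow 2).fun_neg.exp.congr_deriv (by norm_num; field_simp)
  refine (h_erf.add (((hasDerivAt_id v).div_const √π).mul h_exp)).congr_deriv ?_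
  simp only [id]
  field_simp
  ring

theorem mul_sub_le_foldedNormalMean_sub (b : ℝ) {u v : ℝ} (hu : 0 < u) (huv : u ≤ v) :
    exp (-(b / u) ^ 2) / √π * (v - u) ≤ foldedNormalMean b v - foldedNormalMean b u := by
  have hderiv : ∀ x ∈ Set.Ici u, HasDerivAt (foldedNormalMean b) (exp (-(b / x) ^ 2) / √π) x :=
    fun x hx ↦ hasDerivAt_foldedNormalMean b (hu.trans_le hx).ne'
  refine (convex_Ici u).mul_sub_le_image_sub_of_le_deriv
    (fun x hx ↦ (hderiv x hx).continuousAt.continuousWithinAt)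
    (fun x hx ↦ (hderiv x (interior_subset hx)).differentiableAt.differentiableWithinAt)
    (fun x hx ↦ ?_) u Set.self_mem_Ici v huv huv
  have hux : u ≤ x := interior_subset hx
  rw [(hderiv x hux).deriv, div_pow, div_pow]
  gcongr

theorem sqrt_two_sub_one_mul_le_sqrt_one_add_sub_one {t : ℝ} (ht₀ : 0 ≤ t) (ht₁ : t ≤ 1) :
    (√2 - 1) * t ≤ √(1 + t) - 1 := by
  have h_chord : (1 - t) * √1 + t * √2 ≤ √((1 - t) * 1 + t * 2) :=
    strictConcaveOn_sqrt.concaveOn.2 (Set.mem_Ici.2 zero_le_one) (Set.mem_Ici.2 zero_le_two)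
      (sub_nonneg.2 ht₁) ht₀ (sub_add_cancel 1 t)
  rw [sqrt_one, show (1 - t) * 1 + t * 2 = 1 + t by ring] at h_chord
  linarith

theorem stmt18_general (b : ℝ) {s : ℝ} (hs : |s| ≤ 1) :
    (√2 - 1) / √π * s ^ 2 * exp (-b ^ 2) ≤ ftil b s - ftil b 0 := by
  have hv : 1 ≤ √(1 + s ^ 2) := one_le_sqrt.2 (le_add_of_nonneg_right (sq_nonneg s))
  calc (√2 - 1) / √π * s ^ 2 * exp (-b ^ 2)
      = exp (-(b / 1) ^ 2) / √π * ((√2 - 1) * s ^ 2) := by rw [div_one]; ring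
    _ ≤ exp (-(b / 1) ^ 2) / √π * (√(1 + s ^ 2) - 1) := by
        gcongr
        exact sqrt_two_sub_one_mul_le_sqrt_one_add_sub_one (sq_nonneg s)
          ((sq_le_one_iff_abs_le_one s).2 hs)
    _ ≤ foldedNormalMean b √(1 + s ^ 2) - foldedNormalMean b 1 :=
        mul_sub_le_foldedNormalMean_sub b one_pos hv
    _ = ftil b s - ftil b 0 := by rw [ftil_eq_foldedNormalMean b s, ftil_zero]

theorem stmt18 (b : ℝ) : ∀ s : ℝ, 0 ≤ s → s ≤ 1 →
    (Real.sqrt 2 - 1) / Real.sqrt π * s ^ 2 * Real.exp (-b ^ 2) ≤ ftil b s - ftil b 0 :=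
  fun _ hs₀ hs₁ ↦ stmt18_general b ((abs_of_nonneg hs₀).trans_le hs₁)
end
end
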